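/- (Racah relation.) Let j⁽⁰⁾,…,j⁽⁴⁾ satisfy the inequalities and N := j⁽¹⁾+j⁽²⁾−j⁽³⁾+j⁽⁴⁾+j⁽⁰⁾ ∈ ℤ_{>0} as in the context, and assume the positivity conditions making the three families of orthonormalized Racah functions below well defined. Then for every integer 0 ≤ p ≤ N there exists ε ∈ {+1, −1} such that, for all integers 0 ≤ n, m ≤ N−p: Σ_{k₁=0}^{N−p} Σ_{k₂=0}^{N−p} (−1)^{k₁+k₂+m} · 𝒫_n(k₁; −2j⁽²⁾−1, −2j⁽¹⁾−1, p−N−1, N−p−2j⁽²⁾+2j⁽³⁾+1) · 𝒫_{k₁}(k₂; 2j⁽³⁾+1, −2j⁽²⁾−1, p−N−1, N−p−2j⁽¹⁾+2j⁽³⁾+1) · 𝒫_{k₂}(m; −2j⁽¹⁾−1, 2j⁽³⁾+1, p−N−1, N−p−2j⁽¹⁾−2j⁽²⁾−1) = ε·δ_{n,m}. -/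

import Mathlib

noncomputable section

open Finset Real

/-- Pochhammer symbol `(y)_k = y(y+1)⋯(y+k−1)` for real `y`. -/
def poch (y : ℝ) (k : ℕ) : ℝ := ∏ i ∈ Finset.range k, (y + i)

/-- The terminating Racah function `r_n(m; α, β, −𝒩−1, δ)` on the grid `{0,…,𝒩}`:
`r_n(m) = ∑_{k=0}^{n} (−n)_k (n+α+β+1)_k (−m)_k (m−𝒩+δ)_k /
  ((α+1)_k (β+δ+1)_k (−𝒩)_k k!)`. -/
def racah (𝒩 : ℕ) (α β δ : ℝ) (n m : ℕ) : ℝ :=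
  ∑ k ∈ Finset.range (n + 1),
    (poch (-(n : ℝ)) k * poch ((n : ℝ) + α + β + 1) k * poch (-(m : ℝ)) k *
        poch ((m : ℝ) - (𝒩 : ℝ) + δ) k) /
      (poch (α + 1) k * poch (β + δ + 1) k * poch (-(𝒩 : ℝ)) k * (Nat.factorial k : ℝ))

/-- Coefficient `A_n` of the Racah recurrence relation. -/
def coeffA (𝒩 : ℕ) (α β δ : ℝ) (n : ℕ) : ℝ :=
  ((n : ℝ) + α + 1) * ((n : ℝ) + β + δ + 1) * ((n : ℝ) - (𝒩 : ℝ)) * ((n : ℝ) + α + β + 1) /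
    ((2 * (n : ℝ) + α + β + 1) * (2 * (n : ℝ) + α + β + 2))

/-- Coefficient `C_n` of the Racah recurrence relation. -/
def coeffC (𝒩 : ℕ) (α β δ : ℝ) (n : ℕ) : ℝ :=
  (n : ℝ) * ((n : ℝ) + α + β + (𝒩 : ℝ) + 1) * ((n : ℝ) + α - δ) * ((n : ℝ) + β) /
    ((2 * (n : ℝ) + α + β) * (2 * (n : ℝ) + α + β + 1))

/-- Coefficient `B_m` of the Racah difference relation. -/
def coeffB (𝒩 : ℕ) (α β δ : ℝ) (m : ℕ) : ℝ :=
  ((m : ℝ) + α + 1) * ((m : ℝ) + β + δ + 1) * ((m : ℝ) - (𝒩 : ℝ)) * ((m : ℝ) - (𝒩 : ℝ) + δ) /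
    ((2 * (m : ℝ) - (𝒩 : ℝ) + δ) * (2 * (m : ℝ) - (𝒩 : ℝ) + δ + 1))

/-- Coefficient `D_m` of the Racah difference relation. -/
def coeffD (𝒩 : ℕ) (α β δ : ℝ) (m : ℕ) : ℝ :=
  (m : ℝ) * ((m : ℝ) - (𝒩 : ℝ) - 1 - α + δ) * ((m : ℝ) - (𝒩 : ℝ) - 1 - β) * ((m : ℝ) + δ) /
    ((2 * (m : ℝ) - (𝒩 : ℝ) - 1 + δ) * (2 * (m : ℝ) - (𝒩 : ℝ) + δ))

/-- Normalization constant `κ = (α−δ+1)_𝒩 (β+1)_𝒩 / ((α+β+2)_𝒩 (−δ)_𝒩)`. -/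
def kappa (𝒩 : ℕ) (α β δ : ℝ) : ℝ :=
  poch (α - δ + 1) 𝒩 * poch (β + 1) 𝒩 / (poch (α + β + 2) 𝒩 * poch (-δ) 𝒩)

/-- The orthonormalized Racah function `𝒫_n(m; α, β, −𝒩−1, δ)`. -/
def Pfun (𝒩 : ℕ) (α β δ : ℝ) (n m : ℕ) : ℝ :=
  Real.sqrt (kappa 𝒩 α β δ) *
    (∏ i ∈ Finset.range n,
      coeffA 𝒩 α β δ i / Real.sqrt (coeffA 𝒩 α β δ i * coeffC 𝒩 α β δ (i + 1))) *
    (∏ j ∈ Finset.range m,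
      coeffB 𝒩 α β δ j / Real.sqrt (coeffB 𝒩 α β δ j * coeffD 𝒩 α β δ (j + 1))) *
    racah 𝒩 α β δ n m

/-- The positivity conditions making `𝒫_·(·; α, β, −𝒩−1, δ)` well defined. -/
def PosCond (𝒩 : ℕ) (α β δ : ℝ) : Prop :=
  (∀ i < 𝒩, 0 < coeffA 𝒩 α β δ i * coeffC 𝒩 α β δ (i + 1)) ∧
  (∀ j < 𝒩, 0 < coeffB 𝒩 α β δ j * coeffD 𝒩 α β δ (j + 1)) ∧
  0 < kappa 𝒩 α β δ

lemma poch_zero' (y : ℝ) : poch y 0 = 1 := by simp [poch]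

lemma poch_succ' (y : ℝ) (k : ℕ) : poch y (k+1) = poch y k * (y + k) := by
  simp [poch, Finset.prod_range_succ]

lemma poch_succ_left (y : ℝ) (k : ℕ) : poch y (k+1) = y * poch (y+1) k := by
  simp only [poch, Finset.prod_range_succ']
  rw [mul_comm]
  congr 1
  · simp
  · apply Finset.prod_congr rfl
    intro i _
    push_cast
    ring

lemma poch_ne (y : ℝ) (k : ℕ) (h : ∀ t < k, y + (t:ℝ) ≠ 0) : poch y k ≠ 0 := by
  rw [poch, Finset.prod_ne_zero_iff]
  intro i hi
  exact h i (Finset.mem_range.1 hi)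

lemma poch_neg_zero (n k : ℕ) (h : n < k) : poch (-(n:ℝ)) k = 0 := by
  rw [poch, Finset.prod_eq_zero_iff]
  exact ⟨n, Finset.mem_range.2 h, by simp⟩

/-- Nonvanishing and positivity hypotheses in the symmetric parametrization
`α = x`, `β = y`, `δ = M + x + z + 1`. -/
structure Good (M : ℕ) (x y z : ℝ) : Prop where
  hxy : ∀ t ≤ 2 * M, x + y + 1 + (t:ℝ) ≠ 0
  hxz : ∀ t ≤ 2 * M, x + z + 1 + (t:ℝ) ≠ 0
  hx : ∀ t < M, x + 1 + (t:ℝ) ≠ 0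
  hS : ∀ t < M, x + y + z + M + 2 + (t:ℝ) ≠ 0
  hy : ∀ t < M, y + 1 + (t:ℝ) ≠ 0
  hz : ∀ t < M, -(M:ℝ) - z + (t:ℝ) ≠ 0
  pos : PosCond M x y (M + x + z + 1)

/-- The Newton-type basis functions in the variable `v`. -/
def phi (u : ℝ) (k : ℕ) (v : ℝ) : ℝ := poch (-v) k * poch (v + u) k

/-- denominators -/
def den (M : ℕ) (x y z : ℝ) (k : ℕ) : ℝ :=
  poch (x + 1) k * poch (x + y + z + M + 2) k * poch (-(M : ℝ)) k * (Nat.factorial k : ℝ)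

/-- Racah function with real arguments and symmetric parameters. -/
def Rr (M : ℕ) (x y z : ℝ) (w v : ℝ) : ℝ :=
  ∑ k ∈ Finset.range (M + 1), phi (x + y + 1) k w * phi (x + z + 1) k v / den M x y z k

lemma Rr_swap (M : ℕ) (x y z w v : ℝ) : Rr M x y z w v = Rr M x z y v w := by
  unfold Rr den
  apply Finset.sum_congr rfl
  intro k _
  rw [show x + y + z + (M:ℝ) + 2 = x + z + y + M + 2 by ring]
  ring

lemma racah_eq (M : ℕ) (x y z : ℝ) (n m : ℕ) (hn : n ≤ M) :
    racah M x y (M + x + z + 1) n m = Rr M x y z n m := by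
  unfold racah Rr
  rw [← Finset.sum_subset (Finset.range_mono (Nat.succ_le_succ hn))]
  · apply Finset.sum_congr rfl
    intro k _
    unfold phi den
    rw [show (n:ℝ) + x + y + 1 = n + (x + y + 1) by ring,
      show (m:ℝ) - M + (M + x + z + 1) = m + (x + z + 1) by ring,
      show y + (M + x + z + 1) + 1 = x + y + z + (M:ℝ) + 2 by ring]
    ring
  · intro k _ hk
    have : n < k := by
      simp only [Finset.mem_range] at hk; omega
    simp [phi, poch_neg_zero n k this]

lemma phi_succ (u : ℝ) (k : ℕ) (v : ℝ) :
    phi u (k+1) v = phi u k v * ((k - v) * (k + v + u)) := by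
  unfold phi
  rw [poch_succ', poch_succ']
  ring

lemma phi_up (u : ℝ) (j : ℕ) (v : ℝ) :
    (v + u) * (phi u (j+1) (v+1) - phi u (j+1) v) =
      -(j+1) * (2*v+u+1) * (phi u j v * (v+u+j)) := by
  unfold phi
  have h1 : poch (-(v+1)) (j+1) = (-(v+1)) * poch (-v) j := by
    rw [poch_succ_left]; congr 2; ring
  have h2 : poch (v+1+u) (j+1) = poch (v+u+1) j * (v+u+1+j) := by
    rw [poch_succ']
    rw [show v+1+u = v+u+1 by ring]
  have h3 : poch (v+u) (j+1) = (v+u) * poch (v+u+1) j := poch_succ_left _ _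
  have h4 : poch (v+u) j * (v+u+j) = (v+u) * poch (v+u+1) j := by
    rw [← poch_succ', h3]
  rw [h1, h2, h3, poch_succ' (-v)]
  linear_combination (j+1) * (2*v+u+1) * poch (-v) j * h4

lemma phi_down (u : ℝ) (j : ℕ) (v : ℝ) :
    v * (phi u (j+1) (v-1) - phi u (j+1) v) =
      -(j+1) * (2*v+u-1) * (phi u j v * (j-v)) := by
  unfold phi
  have h1 : poch (-(v-1)) (j+1) = poch (-v+1) j * (-v+1+j) := by
    rw [poch_succ', show -(v-1) = -v+1 by ring]
  have h2 : poch (v-1+u) (j+1) = (v+u-1) * poch (v+u) j := by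
    rw [poch_succ_left, show v-1+u = v+u-1 by ring, show v+u-1+1 = v+u by ring]
  have h3 : poch (-v) (j+1) = (-v) * poch (-v+1) j := poch_succ_left _ _
  have h4 : poch (-v) j * (-v+j) = (-v) * poch (-v+1) j := by
    rw [← poch_succ', h3]
  rw [h1, h2, h3, poch_succ' (v+u)]
  linear_combination (j+1) * (2*v+u-1) * poch (v+u) j * h4

/-- B in symmetric parameters -/
def Bf (M : ℕ) (x y z : ℝ) (m : ℕ) : ℝ :=
  ((m:ℝ) + x + 1) * (m + x + y + z + M + 2) * (m - M) * (m + x + z + 1) /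
    ((2 * m + x + z + 1) * (2 * m + x + z + 2))

/-- D in symmetric parameters -/
def Df (M : ℕ) (x y z : ℝ) (m : ℕ) : ℝ :=
  (m:ℝ) * (m + z) * (m - M - 1 - y) * (m + M + x + z + 1) /
    ((2 * m + x + z) * (2 * m + x + z + 1))

lemma coeffB_eq (M : ℕ) (x y z : ℝ) (m : ℕ) :
    coeffB M x y (M + x + z + 1) m = Bf M x y z m := by
  unfold coeffB Bf
  congr 1 <;> ring

lemma coeffD_eq (M : ℕ) (x y z : ℝ) (m : ℕ) :
    coeffD M x y (M + x + z + 1) m = Df M x y z m := by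
  unfold coeffD Df
  congr 1 <;> ring

lemma coeffA_eq (M : ℕ) (x y z : ℝ) (m : ℕ) :
    coeffA M x y (M + x + z + 1) m = Bf M x z y m := by
  unfold coeffA Bf
  congr 1 <;> ring

lemma coeffC_eq (M : ℕ) (x y z : ℝ) (m : ℕ) :
    coeffC M x y (M + x + z + 1) m = Df M x z y m := by
  unfold coeffC Df
  congr 1 <;> ring

lemma aux_div (P p q J F : ℝ) (hq : q ≠ 0) :
    P / (p * q) * (J * q * F) = J * P / p * F := by
  rcases eq_or_ne p 0 with rfl | hp
  · simp
  · field_simp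

lemma phi_step (M : ℕ) (x y z : ℝ) (hxz : ∀ t ≤ 2 * M, x + z + 1 + (t:ℝ) ≠ 0)
    (j m : ℕ) (hm : m ≤ M) :
    Bf M x y z m * (phi (x+z+1) (j+1) (m+1) - phi (x+z+1) (j+1) m) +
      Df M x y z m * (phi (x+z+1) (j+1) (m-1) - phi (x+z+1) (j+1) m) =
    (j+1) * (j+1+x+y+1) * phi (x+z+1) (j+1) m
      - (j+1) * (j+1+x) * (j+x+y+z+M+2) * (j - M) * phi (x+z+1) j m := by
  have h0 : 2*(m:ℝ) + x + z + 1 ≠ 0 := by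
    have := hxz (2*m) (by omega)
    push_cast at this
    intro h; apply this; linarith
  have hB : Bf M x y z m * (phi (x+z+1) (j+1) (m+1) - phi (x+z+1) (j+1) m) =
      -(j+1) * ((m + x + 1) * (m + x + y + z + M + 2) * (m - M)) / (2*m+x+z+1) *
        (phi (x+z+1) j m * (m+(x+z+1)+j)) := by
    rcases hm.lt_or_eq with hlt | rfl
    · have h1 : 2*(m:ℝ) + x + z + 2 ≠ 0 := by
        have := hxz (2*m+1) (by omega)
        push_cast at this
        intro h; apply this; linarith
      have := phi_up (x+z+1) j m
      unfold Bf
      rw [show ((m:ℝ) + x + 1) * (m + x + y + z + M + 2) * (m - M) * (m + x + z + 1) /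
        ((2 * m + x + z + 1) * (2 * m + x + z + 2)) =
        (((m:ℝ) + x + 1) * (m + x + y + z + M + 2) * (m - M)) /
        ((2 * m + x + z + 1) * (2 * m + x + z + 2)) * (m + (x + z + 1)) by ring,
        mul_assoc, this, show 2*(m:ℝ)+(x+z+1)+1 = 2*m+x+z+2 by ring, aux_div _ _ _ _ _ h1]
    · simp [Bf]
  have hD : Df M x y z m * (phi (x+z+1) (j+1) (m-1) - phi (x+z+1) (j+1) m) =
      -(j+1) * ((m + z) * (m - M - 1 - y) * (m + M + x + z + 1)) / (2*m+x+z+1) *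
        (phi (x+z+1) j m * (j-m)) := by
    rcases Nat.eq_zero_or_pos m with rfl | hp
    · cases j with
      | zero => simp [Df]
      | succ j => simp [Df, phi, poch_neg_zero 0 (j+1) (Nat.succ_pos _), poch_succ_left]
    · have h1 : 2*(m:ℝ) + x + z ≠ 0 := by
        obtain ⟨q, rfl⟩ : ∃ q, m = q + 1 := ⟨m-1, by omega⟩
        have := hxz (2*q+1) (by omega)
        push_cast at this ⊢
        intro h; apply this; linarith
      have := phi_down (x+z+1) j m
      unfold Df
      rw [show (m:ℝ) * (m + z) * (m - M - 1 - y) * (m + M + x + z + 1) /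
        ((2 * m + x + z) * (2 * m + x + z + 1)) =
        ((m + z) * (m - M - 1 - y) * (m + M + x + z + 1)) /
        ((2 * m + x + z) * (2 * m + x + z + 1)) * (m:ℝ) by ring,
        mul_assoc, this, show 2*(m:ℝ)+(x+z+1)-1 = 2*m+x+z by ring,
        mul_comm (2*(m:ℝ)+x+z), aux_div _ _ _ _ _ h1]
  rw [hB, hD, phi_succ, div_mul_eq_mul_div, div_mul_eq_mul_div, ← add_div, div_eq_iff h0]
  ring

lemma diff_eq (M : ℕ) (x y z : ℝ)
    (hxz : ∀ t ≤ 2 * M, x + z + 1 + (t:ℝ) ≠ 0)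
    (hx : ∀ t < M, x + 1 + (t:ℝ) ≠ 0)
    (hS : ∀ t < M, x + y + z + M + 2 + (t:ℝ) ≠ 0) (n m : ℕ) (hn : n ≤ M) (hm : m ≤ M) :
    Bf M x y z m * (Rr M x y z n (m+1) - Rr M x y z n m) +
      Df M x y z m * (Rr M x y z n (m-1) - Rr M x y z n m) =
    n * (n + x + y + 1) * Rr M x y z n m := by
  set c : ℕ → ℝ := fun k => phi (x + y + 1) k n / den M x y z k with hc
  have hR : ∀ v, Rr M x y z n v = ∑ k ∈ Finset.range (M+1), c k * phi (x+z+1) k v := by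
    intro v
    unfold Rr
    apply Finset.sum_congr rfl
    intro k _
    simp only [hc]
    ring
  have hck : ∀ k < M, c (k+1) * ((k+1) * (k+1+x) * (k+x+y+z+M+2) * (k - M)) =
      c k * ((k - n) * (k + n + (x+y+1))) := by
    intro k hk
    simp only [hc]
    have d1 := poch_ne (x+1) k (fun t ht => hx t (by omega))
    have d2 := poch_ne (x+y+z+M+2) k (fun t ht => hS t (by omega))
    have d3 : poch (-(M:ℝ)) k ≠ 0 := poch_ne _ k (fun t ht => by
      have : (t:ℝ) < M := by exact_mod_cast (by omega : t < M)
      intro h; linarith)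
    have e1 := hx k hk
    have e2 := hS k hk
    have e3 : -(M:ℝ) + k ≠ 0 := by
      have : (k:ℝ) < M := by exact_mod_cast hk
      intro h; linarith
    have e4 : (k:ℝ) + 1 ≠ 0 := by positivity
    have e5 : (Nat.factorial k : ℝ) ≠ 0 := by positivity
    unfold den
    rw [phi_succ, poch_succ', poch_succ', poch_succ', Nat.factorial_succ]
    push_cast
    field_simp
    ring
  have hcM : c M * ((M - n) * (M + n + (x+y+1))) = 0 := by
    rcases hn.lt_or_eq with h | rfl
    · simp [hc, phi, poch_neg_zero n M h]
    · simp
  have key : ∀ k, Bf M x y z m * (c k * phi (x+z+1) k (m+1) - c k * phi (x+z+1) k m) +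
      Df M x y z m * (c k * phi (x+z+1) k (m-1) - c k * phi (x+z+1) k m) =
      c k * (k * (k+x+y+1)) * phi (x+z+1) k m -
        c k * (k * (k+x) * (k+x+y+z+M+1) * (k-1-M)) * phi (x+z+1) (k-1) m := by
    intro k
    cases k with
    | zero => simp [phi, poch_zero']
    | succ j =>
      have := phi_step M x y z hxz j m hm
      rw [Nat.add_sub_cancel]
      push_cast
      linear_combination c (j+1) * this
  rw [hR, hR, hR, ← Finset.sum_sub_distrib, ← Finset.sum_sub_distrib, Finset.mul_sum,
    Finset.mul_sum, Finset.mul_sum, ← Finset.sum_add_distrib,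
    Finset.sum_congr rfl (fun k _ => key k), Finset.sum_sub_distrib,
    Finset.sum_range_succ' (fun k => c k * ((k:ℝ) * (k+x) * (k+x+y+z+M+1) * (k-1-M)) *
      phi (x+z+1) (k-1) m) M]
  rw [Finset.sum_congr rfl (g := fun k : ℕ => c k * (((k:ℝ) - n) * (k + n + (x+y+1))) *
    phi (x+z+1) k m) (s₁ := Finset.range M) (fun k hk => by
      rw [← hck k (Finset.mem_range.1 hk), Nat.add_sub_cancel]
      push_cast
      ring)]
  simp only [Nat.cast_zero, zero_mul, mul_zero, add_zero]
  have h2 : ∑ k ∈ Finset.range M, c k * (((k:ℝ) - n) * (k + n + (x+y+1))) * phi (x+z+1) k m =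
      ∑ k ∈ Finset.range (M+1), c k * (((k:ℝ) - n) * (k + n + (x+y+1))) * phi (x+z+1) k m := by
    rw [Finset.sum_range_succ, hcM]; simp
  rw [h2, ← Finset.sum_sub_distrib]
  apply Finset.sum_congr rfl
  intro k _
  ring

/-- closed form of the weight -/
def wt (a b c : ℝ) (M n : ℕ) : ℝ :=
  (2*n+a)/a * (poch a n * poch b n * poch c n * poch (-(M:ℝ)) n) /
    ((Nat.factorial n : ℝ) * poch (1+a-b) n * poch (1+a-c) n * poch (1+a+M) n)

lemma wt_step (a b c : ℝ) (M : ℕ) (ha : ∀ t ≤ 2*M+2, a + (t:ℝ) ≠ 0)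
    (hb : ∀ t < M+1, 1+a-b+(t:ℝ) ≠ 0) (hc : ∀ t < M+1, 1+a-c+(t:ℝ) ≠ 0) (n : ℕ) (hn : n ≤ M+1) :
    ∑ i ∈ Finset.range (n+1), ((1+a-b+M)*(1+a-c+M) * wt a b c (M+1) i
        - (1+a+M)*(1+a-b-c+M) * wt a b c M i) =
    (1+a+M)/a * (poch a (n+1) * poch b (n+1) * poch c (n+1) * poch (-(M:ℝ)) n) /
    ((Nat.factorial n : ℝ) * poch (1+a-b) n * poch (1+a-c) n * poch (1+a+M) (n+1)) := by
  have a0 : a ≠ 0 := by simpa using ha 0 (by omega)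
  have aM : ∀ t ≤ M+1, 1+a+M+(t:ℝ) ≠ 0 := by
    intro t ht
    have := ha (1+M+t) (by omega)
    push_cast at this
    intro h; apply this; linarith
  induction n with
  | zero =>
    have := aM 0 (by omega)
    have : 1+a+(M:ℝ) ≠ 0 := by simpa using this
    simp [wt, poch_zero', poch_succ']
    field_simp
    ring
  | succ n ih =>
    rw [Finset.sum_range_succ, ih (by omega)]
    have p1 := poch_ne (1+a-b) n (fun t ht => hb t (by omega))
    have p2 := poch_ne (1+a-c) n (fun t ht => hc t (by omega))
    have p3 := poch_ne (1+a+M) n (fun t ht => aM t (by omega))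
    have q1 := hb n (by omega)
    have q2 := hc n (by omega)
    have q3 := aM n (by omega)
    have q4 := aM (n+1) (by omega)
    have q5 : 1+a+(M:ℝ) ≠ 0 := by simpa using aM 0 (by omega)
    have e4 : (n:ℝ) + 1 ≠ 0 := by positivity
    have e5 : (Nat.factorial n : ℝ) ≠ 0 := by positivity
    have hM1 : poch (-((M+1:ℕ):ℝ)) (n+1) = -(M+1) * poch (-(M:ℝ)) n := by
      rw [poch_succ_left]; push_cast; congr 2; ring
    have hM2 : poch (1+a+((M+1:ℕ):ℝ)) (n+1) =
        poch (1+a+M) n * (1+a+M+n) * (1+a+M+(n+1)) / (1+a+M) := by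
      rw [eq_div_iff q5]
      have h1 := poch_succ_left (1+a+M) (n+1)
      rw [poch_succ', poch_succ'] at h1
      push_cast at h1 ⊢
      rw [h1, show 1+a+((M:ℝ)+1) = 1+a+M+1 by ring]
      ring
    unfold wt
    rw [hM1, hM2]
    simp only [poch_succ', Nat.factorial_succ]
    push_cast at q4 ⊢
    field_simp
    ring

lemma wt_sum (a b c : ℝ) (M : ℕ) (ha : ∀ t ≤ 2*M, a + (t:ℝ) ≠ 0)
    (hb : ∀ t < M, 1+a-b+(t:ℝ) ≠ 0) (hc : ∀ t < M, 1+a-c+(t:ℝ) ≠ 0) :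
    (∑ i ∈ Finset.range (M+1), wt a b c M i) * (poch (1+a-b) M * poch (1+a-c) M) =
      poch (1+a) M * poch (1+a-b-c) M := by
  induction M with
  | zero =>
    have a0 : a ≠ 0 := by simpa using ha 0 (by omega)
    simp [wt, poch_zero', a0]
  | succ M ih =>
    have ih := ih (fun t ht => ha t (by omega)) (fun t ht => hb t (by omega))
      (fun t ht => hc t (by omega))
    have h := wt_step a b c M (fun t ht => ha t (by omega)) hb hc (M+1) le_rfl
    rw [poch_neg_zero M (M+1) (by omega)] at h
    simp only [mul_zero, zero_div] at h
    rw [Finset.sum_sub_distrib, ← Finset.mul_sum, ← Finset.mul_sum,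
      Finset.sum_range_succ (fun i => wt a b c M i) (M+1)] at h
    have hz : wt a b c M (M+1) = 0 := by simp [wt, poch_neg_zero M (M+1) (by omega)]
    rw [hz, add_zero] at h
    simp only [poch_succ']
    linear_combination (poch (1+a-b) M * poch (1+a-c) M) * h + (1+a+M)*(1+a-b-c+M) * ih

/-- Symmetric tridiagonal matrix. -/
def tri (M : ℕ) (d e : ℕ → ℝ) : Matrix (Fin (M+1)) (Fin (M+1)) ℝ := fun i j =>
  if (i:ℕ) = j then d i else if (i:ℕ) + 1 = j then e i else if (j:ℕ) + 1 = i then e j else 0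

lemma tri_transpose (M : ℕ) (d e : ℕ → ℝ) : (tri M d e).transpose = tri M d e := by
  ext i j
  simp only [Matrix.transpose_apply, tri]
  by_cases h : (i:ℕ) = j
  · simp [h]
  · have h' : ¬ (j:ℕ) = i := fun q => h q.symm
    simp only [h, h', if_false]
    by_cases h1 : (i:ℕ)+1 = j
    · have : ¬ (j:ℕ)+1 = i := by omega
      simp [h1, this]
    · simp [h1]

lemma tri_sum (M : ℕ) (d e f : ℕ → ℝ) (he : e M = 0) (i : Fin (M+1)) :
    ∑ j : Fin (M+1), tri M d e i j * f j =
      d i * f i + e i * f (i+1) + (if (i:ℕ) = 0 then 0 else e (i-1) * f (i-1)) := by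
  have h1 : ∀ j : Fin (M+1), tri M d e i j * f j =
      (if (i:ℕ) = j then d i * f i else 0) + (if (i:ℕ)+1 = j then e i * f (i+1) else 0) +
      (if (j:ℕ)+1 = i then e (i-1) * f (i-1) else 0) := by
    intro j
    unfold tri
    by_cases h : (i:ℕ) = j
    · simp [h]
    · by_cases h1 : (i:ℕ)+1 = j
      · have : ¬ (j:ℕ)+1 = i := by omega
        simp only [h, h1, this, if_false, if_true]; simp
      · by_cases h2 : (j:ℕ)+1 = i
        · simp only [h, h1, h2, if_false, if_true]; rw [← h2]; simp
        · simp [h, h1, h2]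
  rw [Finset.sum_congr rfl (fun j _ => h1 j), Finset.sum_add_distrib, Finset.sum_add_distrib]
  have hi := i.isLt
  congr 1
  · congr 1
    · rw [Finset.sum_eq_single i] <;> simp
      intro b hb h; exact absurd (Fin.ext h.symm) hb
    · by_cases hM : (i:ℕ) = M
      · rw [hM, he]; simp
      · rw [Finset.sum_eq_single (⟨i+1, by omega⟩ : Fin (M+1))]
        · simp
        · intro b _ hb
          rw [if_neg]
          intro h; exact hb (Fin.ext h.symm)
        · simp
  · by_cases h0 : (i:ℕ) = 0
    · simp [h0]
    · rw [Finset.sum_eq_single (⟨i-1, by omega⟩ : Fin (M+1))]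
      · simp only [h0, if_false]
        rw [if_pos]; show (i:ℕ) - 1 + 1 = i; omega
      · intro b _ hb
        rw [if_neg]
        intro h; exact hb (Fin.ext (by simp; omega))
      · simp

/-- A matrix commuting with a simple diagonal matrix and an irreducible tridiagonal
matrix is scalar. -/
lemma scalar_of_comm (M : ℕ) (lam d e : ℕ → ℝ) (X : Matrix (Fin (M+1)) (Fin (M+1)) ℝ)
    (hl : ∀ i ≤ M, ∀ j ≤ M, i ≠ j → lam i ≠ lam j) (he : ∀ i < M, e i ≠ 0)
    (h1 : Matrix.diagonal (fun i : Fin (M+1) => lam i) * X =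
      X * Matrix.diagonal (fun i : Fin (M+1) => lam i))
    (h2 : tri M d e * X = X * tri M d e) :
    X = X 0 0 • (1 : Matrix (Fin (M+1)) (Fin (M+1)) ℝ) := by
  have hd : ∀ i j, i ≠ j → X i j = 0 := by
    intro i j hij
    have := congrFun (congrFun h1 i) j
    rw [Matrix.diagonal_mul, Matrix.mul_diagonal] at this
    have h3 := hl i (by have := i.isLt; omega) j (by have := j.isLt; omega)
      (fun h => hij (Fin.ext h))
    have h4 : (lam i - lam j) * X i j = 0 := by linarith
    rcases mul_eq_zero.1 h4 with h | h
    · exact absurd (by linarith) h3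
    · exact h
  have hX : X = Matrix.diagonal (fun i => X i i) := by
    ext i j
    by_cases h : i = j
    · subst h; simp
    · simp [h, hd i j h]
  have hs : ∀ k (hk : k < M+1), X ⟨k, hk⟩ ⟨k, hk⟩ = X 0 0 := by
    intro k
    induction k with
    | zero => intro hk; rfl
    | succ k ih =>
      intro hk
      rw [← ih (by omega)]
      have h3 := congrFun (congrFun h2 ⟨k, by omega⟩) ⟨k+1, hk⟩
      rw [hX, Matrix.mul_diagonal, Matrix.diagonal_mul] at h3
      simp only [tri] at h3
      rw [if_neg (by simp), if_pos trivial] at h3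
      have := he k (by omega)
      have h4 : e k * (X ⟨k+1, hk⟩ ⟨k+1, hk⟩ - X ⟨k, by omega⟩ ⟨k, by omega⟩) = 0 := by
        linarith
      rcases mul_eq_zero.1 h4 with h | h
      · exact absurd h this
      · linarith
  ext i j
  by_cases h : i = j
  · subst h; simpa using hs i i.isLt
  · simp [h, hd i j h]

/-- The orthonormal matrix. -/
def Um (M : ℕ) (x y z : ℝ) : Matrix (Fin (M+1)) (Fin (M+1)) ℝ :=
  fun n m => Pfun M x y (M + x + z + 1) n m

/-- Spectrum. -/
def lamf (s : ℝ) (i : ℕ) : ℝ := i * (i + s + 1)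

/-- Tridiagonal matrix for `Bf`, `Df`. -/
def Tm (M : ℕ) (x y z : ℝ) : Matrix (Fin (M+1)) (Fin (M+1)) ℝ :=
  tri M (fun i => -(Bf M x y z i + Df M x y z i)) (fun i => √(Bf M x y z i * Df M x y z (i+1)))

/-- Diagonal matrix of the spectrum. -/
def Lm (M : ℕ) (s : ℝ) : Matrix (Fin (M+1)) (Fin (M+1)) ℝ :=
  Matrix.diagonal (fun i : Fin (M+1) => lamf s i)

lemma Bf_M (M : ℕ) (x y z : ℝ) : Bf M x y z M = 0 := by simp [Bf]
lemma Df_0 (M : ℕ) (x y z : ℝ) : Df M x y z 0 = 0 := by simp [Df]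

/-- The normalizing product. -/
def nrm (M : ℕ) (x y z : ℝ) (n : ℕ) : ℝ :=
  ∏ j ∈ Finset.range n, Bf M x y z j / √(Bf M x y z j * Df M x y z (j+1))

lemma Pfun_eq (M : ℕ) (x y z : ℝ) (n m : ℕ) (hn : n ≤ M) :
    Pfun M x y (M + x + z + 1) n m =
      √(kappa M x y (M+x+z+1)) * nrm M x z y n * nrm M x y z m * Rr M x y z n m := by
  unfold Pfun nrm
  simp only [coeffA_eq, coeffB_eq, coeffC_eq, coeffD_eq, racah_eq M x y z n m hn]

lemma nrm_up (M : ℕ) (x y z : ℝ) (i : ℕ) (h : 0 < Bf M x y z i * Df M x y z (i+1)) :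
    √(Bf M x y z i * Df M x y z (i+1)) * nrm M x y z (i+1) = Bf M x y z i * nrm M x y z i := by
  unfold nrm
  rw [Finset.prod_range_succ]
  have := (Real.sqrt_pos.2 h).ne'
  field_simp

lemma nrm_down (M : ℕ) (x y z : ℝ) (i : ℕ) (h : 0 < Bf M x y z i * Df M x y z (i+1)) :
    √(Bf M x y z i * Df M x y z (i+1)) * nrm M x y z i = Df M x y z (i+1) * nrm M x y z (i+1) := by
  have h1 := nrm_up M x y z i h
  have h2 := Real.mul_self_sqrt h.le
  have hB : Bf M x y z i ≠ 0 := fun q => by simp [q] at h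
  apply mul_left_cancel₀ hB
  rw [mul_left_comm, ← h1]
  linear_combination nrm M x y z (i+1) * h2

/-- One-sided eigenvalue relation. -/
lemma tri_eig (M : ℕ) (x y z : ℝ)
    (hxz : ∀ t ≤ 2 * M, x + z + 1 + (t:ℝ) ≠ 0)
    (hx : ∀ t < M, x + 1 + (t:ℝ) ≠ 0)
    (hS : ∀ t < M, x + y + z + M + 2 + (t:ℝ) ≠ 0)
    (hp : ∀ i < M, 0 < Bf M x y z i * Df M x y z (i+1))
    (n : ℕ) (hn : n ≤ M) (i : Fin (M+1)) :
    ∑ j : Fin (M+1), Tm M x y z i j * (nrm M x y z j * Rr M x y z n (j:ℕ)) =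
      lamf (x+y) n * (nrm M x y z i * Rr M x y z n (i:ℕ)) := by
  unfold Tm
  have hi := i.isLt
  rw [tri_sum M _ _ (fun j => nrm M x y z j * Rr M x y z n (j:ℕ)) (by simp [Bf_M])]
  have hd := diff_eq M x y z hxz hx hS n i hn (by omega)
  have hup : √(Bf M x y z i * Df M x y z (i+1)) * (nrm M x y z (i+1) * Rr M x y z n ((i:ℕ)+1:ℕ)) =
      Bf M x y z i * nrm M x y z i * Rr M x y z n ((i:ℕ)+1) := by
    by_cases h : (i:ℕ) < M
    · rw [← mul_assoc, nrm_up M x y z i (hp i h)]; push_cast; ring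
    · have : (i:ℕ) = M := by omega
      rw [this, Bf_M]; simp
  have hdown : (if (i:ℕ) = 0 then 0 else √(Bf M x y z (i-1:ℕ) * Df M x y z ((i-1:ℕ)+1)) *
      (nrm M x y z (i-1) * Rr M x y z n ((i-1:ℕ):ℝ))) =
      Df M x y z i * nrm M x y z i * Rr M x y z n ((i:ℕ)-1) := by
    by_cases h : (i:ℕ) = 0
    · simp [h, Df_0]
    · rw [if_neg h]
      obtain ⟨q, hq⟩ : ∃ q, (i:ℕ) = q + 1 := ⟨i-1, by omega⟩
      rw [hq]
      simp only [Nat.add_sub_cancel]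
      rw [← mul_assoc, nrm_down M x y z q (hp q (by omega))]
      push_cast
      rw [add_sub_cancel_right]
  rw [hup, hdown]
  unfold lamf
  linear_combination nrm M x y z i * hd

lemma Good.pB {M : ℕ} {x y z : ℝ} (g : Good M x y z) :
    ∀ i < M, 0 < Bf M x y z i * Df M x y z (i+1) := by
  intro i hi
  have := g.pos.2.1 i hi
  rwa [coeffB_eq, coeffD_eq] at this

lemma Good.pA {M : ℕ} {x y z : ℝ} (g : Good M x y z) :
    ∀ i < M, 0 < Bf M x z y i * Df M x z y (i+1) := by
  intro i hi
  have := g.pos.1 i hi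
  rwa [coeffA_eq, coeffC_eq] at this

lemma Good.row {M : ℕ} {x y z : ℝ} (g : Good M x y z) :
    Tm M x z y * Um M x y z = Um M x y z * Lm M (x+z) := by
  ext i m
  rw [Lm, Matrix.mul_diagonal, Matrix.mul_apply]
  have hi := i.isLt
  have hm := m.isLt
  have h := tri_eig M x z y g.hxy g.hx
    (fun t ht => by rw [show x+z+y+(M:ℝ)+2 = x+y+z+M+2 by ring]; exact g.hS t ht) g.pA m (by omega) i
  have hU : ∀ j : Fin (M+1), Um M x y z j m = √(kappa M x y (M+x+z+1)) * nrm M x y z m *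
      (nrm M x z y j * Rr M x z y (m:ℕ) (j:ℕ)) := by
    intro j
    have hj := j.isLt
    rw [Um, Pfun_eq M x y z j m (by omega), Rr_swap]
    ring
  simp only [hU]
  rw [Finset.sum_congr rfl (fun j _ => by rw [mul_left_comm]), ← Finset.mul_sum, h]
  ring

lemma Good.col {M : ℕ} {x y z : ℝ} (g : Good M x y z) :
    Lm M (x+y) * Um M x y z = Um M x y z * Tm M x y z := by
  ext n i
  rw [Lm, Matrix.diagonal_mul, Matrix.mul_apply]
  have hn := n.isLt
  have h := tri_eig M x y z g.hxz g.hx g.hS g.pB n (by omega) i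
  have hU : ∀ j : Fin (M+1), Um M x y z n j = √(kappa M x y (M+x+z+1)) * nrm M x z y n *
      (nrm M x y z j * Rr M x y z (n:ℕ) (j:ℕ)) := by
    intro j
    rw [Um, Pfun_eq M x y z n j (by omega)]
    ring
  have hT : ∀ j, Tm M x y z j i = Tm M x y z i j := fun j =>
    congrFun (congrFun (show (Tm M x y z).transpose = Tm M x y z from tri_transpose M _ _) i) j
  simp only [hU, hT]
  rw [Finset.sum_congr rfl (fun j _ => by
    rw [mul_assoc, mul_comm (nrm M x y z j * _)]), ← Finset.mul_sum, h]
  ring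

lemma lam_inj (M : ℕ) (s : ℝ) (h : ∀ t ≤ 2 * M, s + 1 + (t:ℝ) ≠ 0) :
    ∀ i ≤ M, ∀ j ≤ M, i ≠ j → lamf s i ≠ lamf s j := by
  intro i hi j hj hij he
  unfold lamf at he
  have h1 : ((i:ℝ) - j) * (s + 1 + (i+j:ℕ)) = 0 := by push_cast; linarith
  rcases mul_eq_zero.1 h1 with h2 | h2
  · exact hij (by exact_mod_cast (sub_eq_zero.1 h2))
  · exact h _ (by omega) h2

lemma aux_wt (E E' a P F Z W : ℝ) (hE : E ≠ 0) :
    E' / a * (P * Z) / (F * W) = E / a * P / F * (Z * E' / (W * E)) := by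
  rcases eq_or_ne a 0 with rfl | ha
  · simp
  rcases eq_or_ne F 0 with rfl | hF
  · simp
  rcases eq_or_ne W 0 with rfl | hW
  · simp
  field_simp

lemma aux_ratio (P Q E G E' : ℝ) (hG : G ≠ 0) :
    P / (E * G) / (Q / (G * E')) = P * E' / (Q * E) := by
  rcases eq_or_ne E 0 with rfl | hE
  · simp
  rcases eq_or_ne Q 0 with rfl | hQ
  · simp
  rcases eq_or_ne E' 0 with rfl | hE'
  · simp
  field_simp

lemma wt_succ (a b c : ℝ) (M n : ℕ) (h : 2*(n:ℝ)+a ≠ 0) :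
    wt a b c M (n+1) = wt a b c M n * (((a+n)*(b+n)*(c+n)*(-M+n)*(2*n+a+2)) /
      (((n:ℝ)+1)*(1+a-b+n)*(1+a-c+n)*(1+a+M+n)*(2*n+a))) := by
  unfold wt
  rw [← aux_wt _ _ _ _ _ _ _ h]
  simp only [poch_succ', Nat.factorial_succ]
  push_cast
  congr 1 <;> ring

lemma Good.wt_eq {M : ℕ} {x y z : ℝ} (g : Good M x y z) (n : ℕ) (hn : n ≤ M) :
    nrm M x z y n ^ 2 = wt (x+y+1) (x+1) (x+y+z+M+2) M n := by
  have a0 : x+y+1 ≠ 0 := by simpa using g.hxy 0 (by omega)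
  induction n with
  | zero => simp [nrm, wt, poch_zero', a0]
  | succ n ih =>
    have hp := g.pA n (by omega)
    have h1 : nrm M x z y (n+1) ^ 2 = nrm M x z y n ^ 2 * (Bf M x z y n / Df M x z y (n+1)) := by
      unfold nrm
      rw [Finset.prod_range_succ, mul_pow, div_pow, Real.sq_sqrt hp.le]
      have hB : Bf M x z y n ≠ 0 := fun q => by simp [q] at hp
      have hD : Df M x z y (n+1) ≠ 0 := fun q => by simp [q] at hp
      field_simp
    rw [h1, ih (by omega)]
    have r1 : 2*(n:ℝ)+x+y+1 ≠ 0 := by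
      have := g.hxy (2*n) (by omega)
      push_cast at this; intro h; apply this; linarith
    have r2 : 2*(n:ℝ)+x+y+2 ≠ 0 := by
      have := g.hxy (2*n+1) (by omega)
      push_cast at this; intro h; apply this; linarith
    have hBD : Bf M x z y n / Df M x z y (n+1) =
        ((x+y+1+n)*(x+1+n)*(x+y+z+M+2+n)*(-M+n)*(2*n+x+y+3)) /
        ((n+1)*(1+(x+y+1)-(x+1)+n)*(1+(x+y+1)-(x+y+z+M+2)+n)*(1+(x+y+1)+M+n)*(2*n+x+y+1)) := by
      unfold Bf Df
      rw [show (((n+1:ℕ):ℝ) * (((n+1:ℕ):ℝ) + y) * (((n+1:ℕ):ℝ) - M - 1 - z) *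
          (((n+1:ℕ):ℝ) + M + x + y + 1) /
          ((2 * ((n+1:ℕ):ℝ) + x + y) * (2 * ((n+1:ℕ):ℝ) + x + y + 1))) =
          ((n+1)*(1+(x+y+1)-(x+1)+n)*(1+(x+y+1)-(x+y+z+M+2)+n)*(1+(x+y+1)+M+n)) /
          ((2*n+x+y+2)*(2*n+x+y+3)) by push_cast; congr 1 <;> ring]
      rw [aux_ratio _ _ _ _ _ r2]
      congr 1
      ring
    rw [hBD, wt_succ _ _ _ _ _ (show 2*(n:ℝ)+(x+y+1) ≠ 0 by intro h; apply r1; linarith),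
      show 2*(n:ℝ)+(x+y+1)+2 = 2*n+x+y+3 by ring, show 2*(n:ℝ)+(x+y+1) = 2*n+x+y+1 by ring]

lemma Good.norm0 {M : ℕ} {x y z : ℝ} (g : Good M x y z) :
    ((Um M x y z).transpose * Um M x y z) 0 0 = 1 := by
  rw [Matrix.mul_apply]
  have hk := g.pos.2.2
  have hR : ∀ n : ℕ, Rr M x y z n 0 = 1 := by
    intro n
    unfold Rr
    rw [Finset.sum_range_succ', Finset.sum_eq_zero]
    · simp [phi, den, poch_zero']
    · intro k _
      have := poch_neg_zero 0 (k+1) (by omega)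
      simp only [Nat.cast_zero] at this
      simp [phi, -neg_zero, this]
  have hU : ∀ n : Fin (M+1), (Um M x y z).transpose 0 n * Um M x y z n 0 =
      kappa M x y (M+x+z+1) * wt (x+y+1) (x+1) (x+y+z+M+2) M n := by
    intro n
    have hn := n.isLt
    rw [Matrix.transpose_apply, Um, Pfun_eq M x y z n _ (by omega), ← g.wt_eq n (by omega)]
    simp only [Fin.val_zero, Nat.cast_zero, hR]
    have := Real.mul_self_sqrt hk.le
    simp only [nrm, Finset.range_zero, Finset.prod_empty]
    linear_combination (∏ j ∈ Finset.range n, Bf M x z y j / √(Bf M x z y j * Df M x z y (j+1)))^2 * this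
  rw [Finset.sum_congr rfl (fun n _ => hU n), ← Finset.mul_sum,
    Fin.sum_univ_eq_sum_range (fun n => wt (x+y+1) (x+1) (x+y+z+M+2) M n) (M+1)]
  have hs := wt_sum (x+y+1) (x+1) (x+y+z+M+2) M g.hxy
    (fun t ht => by have := g.hy t ht; intro h; apply this; linarith)
    (fun t ht => by have := g.hz t ht; intro h; apply this; linarith)
  unfold kappa at hk ⊢
  rw [show 1+(x+y+1)-(x+1) = y+1 by ring,
    show 1+(x+y+1)-(x+y+z+(M:ℝ)+2) = x-(M+x+z+1)+1 by ring,
    show 1+(x+y+1) = x+y+2 by ring,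
    show y+1-(x+y+z+(M:ℝ)+2) = -(M+x+z+1) by ring] at hs
  have hne : poch (x+y+2) M * poch (-(M+x+z+1)) M ≠ 0 := fun q => by
    rw [q] at hk; simp at hk
  rw [div_mul_eq_mul_div, div_eq_one_iff_eq hne]
  linear_combination hs

lemma Good.orth {M : ℕ} {x y z : ℝ} (g : Good M x y z) :
    (Um M x y z).transpose * Um M x y z = 1 := by
  have hTt : ∀ a b c, (Tm M a b c).transpose = Tm M a b c := fun a b c => tri_transpose M _ _
  have hLt : ∀ s, (Lm M s).transpose = Lm M s := fun s => Matrix.diagonal_transpose _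
  have r := g.row
  have r' := congrArg Matrix.transpose r
  rw [Matrix.transpose_mul, Matrix.transpose_mul, hTt, hLt] at r'
  have c := g.col
  have c' := congrArg Matrix.transpose c
  rw [Matrix.transpose_mul, Matrix.transpose_mul, hTt, hLt] at c'
  have h := scalar_of_comm M (lamf (x+z)) (fun i => -(Bf M x y z i + Df M x y z i))
    (fun i => √(Bf M x y z i * Df M x y z (i+1))) ((Um M x y z).transpose * Um M x y z)
    (lam_inj M _ g.hxz) (fun i hi => (Real.sqrt_pos.2 (g.pB i hi)).ne')
    (by
      change Lm M (x+z) * _ = _ * Lm M (x+z)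
      rw [← Matrix.mul_assoc, ← r', Matrix.mul_assoc, Matrix.mul_assoc, r])
    (by
      change Tm M x y z * _ = _ * Tm M x y z
      rw [← Matrix.mul_assoc, ← c', Matrix.mul_assoc, Matrix.mul_assoc, c])
  rw [h, g.norm0, one_smul]

/-- Sign matrix. -/
def Sm (M : ℕ) : Matrix (Fin (M+1)) (Fin (M+1)) ℝ :=
  Matrix.diagonal (fun i : Fin (M+1) => (-1:ℝ)^(i:ℕ))

lemma Sm_sq (M : ℕ) : Sm M * Sm M = 1 := by
  unfold Sm
  rw [Matrix.diagonal_mul_diagonal, ← Matrix.diagonal_one]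
  congr 1
  ext i
  rw [← mul_pow]; simp

lemma Sm_L (M : ℕ) (s : ℝ) : Sm M * Lm M s = Lm M s * Sm M := by
  unfold Sm Lm
  rw [Matrix.diagonal_mul_diagonal, Matrix.diagonal_mul_diagonal]
  congr 1
  ext i
  ring

/-- The linear relation between the three operators. -/
lemma rel (M : ℕ) (x y z : ℝ) (h : ∀ t ≤ 2 * M, x + z + 1 + (t:ℝ) ≠ 0) :
    Tm M x y z + Sm M * Tm M z y x * Sm M + Lm M (x+z) =
      ((M:ℝ) * (x+y+z+M+2)) • (1 : Matrix (Fin (M+1)) (Fin (M+1)) ℝ) := by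
  have hoff : ∀ i, i + 1 < M + 1 →
      Bf M x y z i * Df M x y z (i+1) = Bf M z y x i * Df M z y x (i+1) := by
    intro i _
    unfold Bf Df
    rw [div_mul_div_comm, div_mul_div_comm]
    push_cast
    congr 1 <;> ring
  ext i j
  have hi := i.isLt
  have hj := j.isLt
  simp only [Matrix.add_apply, Sm, Lm, Matrix.mul_diagonal, Matrix.diagonal_mul, Tm, tri,
    Matrix.smul_apply, smul_eq_mul]
  by_cases hij : i = j
  · subst hij
    simp only [if_true, Matrix.diagonal_apply_eq, Matrix.one_apply_eq, lamf]
    have hs : (-1:ℝ)^(i:ℕ) * (-1:ℝ)^(i:ℕ) = 1 := by rw [← mul_pow]; simp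
    generalize (i:ℕ) = k at *
    have h0 : 2*(k:ℝ) + x + z + 1 ≠ 0 := by
      have := h (2*k) (by omega)
      push_cast at this; intro h; apply this; linarith
    have hB : Bf M x y z k + Bf M z y x k =
        (k + x + y + z + M + 2) * (k - M) * (k + x + z + 1) / (2*k+x+z+1) := by
      rcases (by omega : k < M ∨ k = M) with hlt | rfl
      · have h1 : 2*(k:ℝ) + x + z + 2 ≠ 0 := by
          have := h (2*k+1) (by omega)
          push_cast at this; intro h; apply this; linarith
        have h0' : 2*(k:ℝ) + z + x + 1 ≠ 0 := by intro h; apply h0; linarith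
        have h1' : 2*(k:ℝ) + z + x + 2 ≠ 0 := by intro h; apply h1; linarith
        unfold Bf
        rw [show 2*(k:ℝ) + z + x + 1 = 2*k+x+z+1 by ring,
          show 2*(k:ℝ) + z + x + 2 = 2*k+x+z+2 by ring,
          ← add_div, div_eq_div_iff (mul_ne_zero h0 h1) h0]
        ring
      · simp [Bf]
    have hD : Df M x y z k + Df M z y x k =
        k * (k - M - 1 - y) * (k + M + x + z + 1) / (2*k+x+z+1) := by
      rcases Nat.eq_zero_or_pos k with rfl | hp
      · simp [Df]
      · obtain ⟨q, rfl⟩ : ∃ q, k = q + 1 := ⟨k-1, by omega⟩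
        have h1 : 2*((q+1:ℕ):ℝ) + x + z ≠ 0 := by
          have := h (2*q+1) (by omega)
          push_cast at this ⊢; intro h; apply this; linarith
        unfold Df
        generalize ((q+1:ℕ):ℝ) = k at h0 h1 ⊢
        rw [show 2*(k:ℝ) + z + x + 1 = 2*k+x+z+1 by ring,
          show 2*(k:ℝ) + z + x = 2*k+x+z by ring,
          ← add_div, div_eq_div_iff (mul_ne_zero h1 h0) h0]
        ring
    have hfin : (k + x + y + z + M + 2) * (k - M) * (k + x + z + 1) / (2*k+x+z+1) +
        k * (k - M - 1 - y) * (k + M + x + z + 1) / (2*k+x+z+1) =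
        k * (k + (x+z) + 1) - M * (x+y+z+M+2) := by
      rw [← add_div, div_eq_iff h0]
      ring
    linear_combination (-(Bf M z y x k + Df M z y x k)) * hs - hB - hD - hfin
  · have hij' : ¬ (i:ℕ) = j := fun q => hij (Fin.ext q)
    simp only [hij', if_false, Matrix.diagonal_apply_ne _ hij, Matrix.one_apply_ne hij]
    by_cases h1 : (i:ℕ)+1 = j
    · simp only [h1, if_true]
      have hs : (-1:ℝ)^(i:ℕ) * (-1:ℝ)^(j:ℕ) = -1 := by
        rw [← h1, pow_succ, ← mul_assoc, ← mul_pow]; simp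
      have := hoff i (by omega)
      rw [h1] at this
      rw [this]
      linear_combination √(Bf M z y x i * Df M z y x j) * hs
    · by_cases h2 : (j:ℕ)+1 = i
      · simp only [h1, h2, if_true, if_false]
        have hs : (-1:ℝ)^(i:ℕ) * (-1:ℝ)^(j:ℕ) = -1 := by
          rw [← h2, pow_succ, mul_assoc, mul_comm (-1:ℝ), ← mul_assoc, ← mul_pow]; simp
        have := hoff j (by omega)
        rw [h2] at this
        rw [this]
        linear_combination √(Bf M z y x j * Df M z y x i) * hs
      · simp [h1, h2]

lemma alg_comm {R : Type*} [Ring R] [Algebra ℝ R] (K : ℝ)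
    (U1 U2 U3 S Lxy Lxz Lyz T1r T2r T3r T1c T2c T3c : R)
    (c1 : Lxy * U1 = U1 * T1c) (r1 : T1r * U1 = U1 * Lxz)
    (c2 : Lxz * U2 = U2 * T2c) (r2 : T2r * U2 = U2 * Lyz)
    (c3 : Lyz * U3 = U3 * T3c) (r3 : T3r * U3 = U3 * Lxy)
    (e1 : T1c + S * T2r * S + Lxz = K • (1:R))
    (e2 : T2c + S * T3r * S + Lyz = K • (1:R))
    (e3 : T3c + S * T1r * S + Lxy = K • (1:R))
    (hSS : S * S = 1) (hxy : S * Lxy = Lxy * S) (hxz : S * Lxz = Lxz * S)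
    (hyz : S * Lyz = Lyz * S) :
    Lxy * (U1 * S * U2 * S * U3 * S) = (U1 * S * U2 * S * U3 * S) * Lxy ∧
    T1r * (U1 * S * U2 * S * U3 * S) = (U1 * S * U2 * S * U3 * S) * T1r := by
  have m : ∀ T T' L : R, T + S * T' * S + L = K • (1:R) → S * L = L * S → ∀ Y : R,
      T * (S * Y) = K • (S * Y) - S * (L * Y) - S * (T' * Y) := by
    intro T T' L e hL Y
    have h1 : T = K • (1:R) - L - S * T' * S := by rw [← e]; abel
    have h2 : S * T' * S * (S * Y) = S * (T' * Y) := by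
      rw [mul_assoc (S * T'), ← mul_assoc S S, hSS, one_mul, mul_assoc]
    rw [h1, sub_mul, sub_mul, h2, smul_mul_assoc, one_mul, ← mul_assoc L, ← hL, mul_assoc]
  have A : ∀ {P Q P' Q' : R}, P * Q = P' * Q' → ∀ Y, P * (Q * Y) = P' * (Q' * Y) := by
    intro P Q P' Q' h Y
    rw [← mul_assoc, h, mul_assoc]
  have hX : U1 * S * U2 * S * U3 * S = U1 * (S * (U2 * (S * (U3 * S)))) := by
    simp only [mul_assoc]
  have m3 := m _ _ _ e3 hxy 1
  simp only [mul_one] at m3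
  rw [hX]
  constructor
  · rw [A c1, m _ _ _ e1 hxz, A c2, A r2, m _ _ _ e2 hyz, A r3, ← A hyz]
    simp only [mul_assoc, mul_sub, mul_smul_comm, hxy]
    abel
  · rw [A r1, ← A hxz, A c2, m _ _ _ e2 hyz, A r3, A c3, m3]
    simp only [mul_assoc, mul_sub, mul_smul_comm, hxy]
    abel

lemma alg_orth (M : ℕ) (U1 U2 U3 S : Matrix (Fin (M+1)) (Fin (M+1)) ℝ)
    (hSS : S * S = 1) (hSt : S.transpose = S) (o1 : U1.transpose * U1 = 1)
    (o2 : U2.transpose * U2 = 1) (o3 : U3.transpose * U3 = 1) :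
    (U1 * S * U2 * S * U3 * S).transpose * (U1 * S * U2 * S * U3 * S) = 1 := by
  have A : ∀ {P Q : Matrix (Fin (M+1)) (Fin (M+1)) ℝ}, P * Q = 1 → ∀ Y, P * (Q * Y) = Y := by
    intro P Q h Y
    rw [← Matrix.mul_assoc, h, Matrix.one_mul]
  simp only [Matrix.transpose_mul, hSt, Matrix.mul_assoc]
  rw [A o1, A hSS, A o2, A hSS, A o3, hSS]

lemma triple (M : ℕ) (x y z : ℝ) (g1 : Good M x y z) (g2 : Good M z x y) (g3 : Good M y z x) :
    ∃ s : ℝ, (s = 1 ∨ s = -1) ∧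
      Um M x y z * Sm M * Um M z x y * Sm M * Um M y z x * Sm M =
        s • (1 : Matrix (Fin (M+1)) (Fin (M+1)) ℝ) := by
  have e1 := rel M x y z g1.hxz
  have e2 := rel M z x y g2.hxz
  have e3 := rel M y z x g3.hxz
  have r2 := g2.row
  have r3 := g3.row
  have c2 := g2.col
  rw [show z + x = x + z by ring] at c2
  rw [show z + x + y + (M:ℝ) + 2 = x + y + z + M + 2 by ring] at e2
  rw [show y + z + x + (M:ℝ) + 2 = x + y + z + M + 2 by ring] at e3
  rw [show z + y = y + z by ring] at r2 e2
  rw [show y + x = x + y by ring] at r3 e3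
  obtain ⟨h1, h2⟩ := alg_comm _ _ _ _ (Sm M) _ _ _ _ _ _ _ _ _ g1.col g1.row c2 r2 g3.col r3
    e1 e2 e3 (Sm_sq M) (Sm_L M _) (Sm_L M _) (Sm_L M _)
  have hXX := alg_orth M _ _ _ (Sm M) (Sm_sq M) (Matrix.diagonal_transpose _)
    g1.orth g2.orth g3.orth
  generalize Um M x y z * Sm M * Um M z x y * Sm M * Um M y z x * Sm M = X at h1 h2 hXX ⊢
  have hsc := scalar_of_comm M (lamf (x+y)) _ _ X
    (lam_inj M _ g1.hxy) (fun i hi => (Real.sqrt_pos.2 (g1.pA i hi)).ne') h1 h2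
  refine ⟨X 0 0, ?_, hsc⟩
  generalize X 0 0 = s at hsc
  rw [hsc] at hXX
  have := congrFun (congrFun hXX 0) 0
  simp at this
  exact mul_self_eq_one_iff.1 (by simpa using this)

/-- The Racah relation: the product of the three transition matrices around a triangular
face of the folded icosidodecahedron is, up to a global sign, the identity. -/
theorem stmt14 (j0 j1 j2 j3 j4 : ℝ) (N : ℕ)
    (h12 : j1 ≥ j2) (h24 : j2 ≥ j4) (h04 : j0 ≥ j4)
    (h0 : j0 ≥ 0) (h1 : j1 ≥ 0) (h2 : j2 ≥ 0) (h3 : j3 ≥ 0) (h4 : j4 ≥ 0)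
    (hup : j1 + j2 + j0 + j4 ≥ j3) (hlow : j3 ≥ j1 + j2 + j0 - j4)
    (hN : 0 < N) (hNdef : (N : ℝ) = j1 + j2 - j3 + j4 + j0)
    (hpos1 : ∀ p : ℕ, p ≤ N →
      PosCond (N - p) (-2*j2 - 1) (-2*j1 - 1) ((N : ℝ) - p - 2*j2 + 2*j3 + 1))
    (hpos2 : ∀ p : ℕ, p ≤ N →
      PosCond (N - p) (2*j3 + 1) (-2*j2 - 1) ((N : ℝ) - p - 2*j1 + 2*j3 + 1))
    (hpos3 : ∀ p : ℕ, p ≤ N →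
      PosCond (N - p) (-2*j1 - 1) (2*j3 + 1) ((N : ℝ) - p - 2*j1 - 2*j2 - 1)) :
    ∀ p : ℕ, p ≤ N → ∃ ε : ℝ, (ε = 1 ∨ ε = -1) ∧
      ∀ n m : ℕ, n ≤ N - p → m ≤ N - p →
        (∑ k1 ∈ Finset.range (N - p + 1), ∑ k2 ∈ Finset.range (N - p + 1),
          (-1 : ℝ) ^ (k1 + k2 + m) *
            Pfun (N - p) (-2*j2 - 1) (-2*j1 - 1) ((N : ℝ) - p - 2*j2 + 2*j3 + 1) n k1 *
            Pfun (N - p) (2*j3 + 1) (-2*j2 - 1) ((N : ℝ) - p - 2*j1 + 2*j3 + 1) k1 k2 *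
            Pfun (N - p) (-2*j1 - 1) (2*j3 + 1) ((N : ℝ) - p - 2*j1 - 2*j2 - 1) k2 m)
          = ε * (if n = m then 1 else 0) := by
  intro p hp
  have hb : 2*j2 ≥ (N:ℝ) := by linarith
  have hp1 := hpos1 p hp
  have hp2 := hpos2 p hp
  have hp3 := hpos3 p hp
  obtain ⟨M, hM⟩ : ∃ M, M = N - p := ⟨_, rfl⟩
  have hMr : (N:ℝ) - p = M := by rw [hM, Nat.cast_sub hp]
  have hMN : (M:ℝ) ≤ N := by rw [← hMr]; have : (0:ℝ) ≤ p := by positivity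
                             linarith
  rw [← hM] at hp1 hp2 hp3 ⊢
  simp only [hMr] at hp1 hp2 hp3 ⊢
  rw [show (M:ℝ) - 2*j2 + 2*j3 + 1 = M + (-2*j2-1) + (2*j3+1) + 1 by ring] at hp1 ⊢
  rw [show (M:ℝ) - 2*j1 + 2*j3 + 1 = M + (2*j3+1) + (-2*j1-1) + 1 by ring] at hp2 ⊢
  rw [show (M:ℝ) - 2*j1 - 2*j2 - 1 = M + (-2*j1-1) + (-2*j2-1) + 1 by ring] at hp3 ⊢
  have hc : 2*j3 ≥ 2*j1 + 2*j2 := by linarith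
  have c1 : ∀ t : ℕ, t ≤ 2*M → (t:ℝ) ≤ 2*M := fun t ht => by exact_mod_cast ht
  have c2 : ∀ t : ℕ, t < M → (t:ℝ) + 1 ≤ M := fun t ht => by exact_mod_cast ht
  have c0 : ∀ t : ℕ, (0:ℝ) ≤ t := fun t => by positivity
  have cM := c0 M
  have g1 : Good M (-2*j2-1) (-2*j1-1) (2*j3+1) := by
    refine ⟨?_, ?_, ?_, ?_, ?_, ?_, hp1⟩ <;> intro t ht h <;> have h0 := c0 t <;>
      first | (have h1 := c1 t ht; linarith) | (have h1 := c2 t ht; linarith)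
  have g2 : Good M (2*j3+1) (-2*j2-1) (-2*j1-1) := by
    refine ⟨?_, ?_, ?_, ?_, ?_, ?_, hp2⟩ <;> intro t ht h <;> have h0 := c0 t <;>
      first | (have h1 := c1 t ht; linarith) | (have h1 := c2 t ht; linarith)
  have g3 : Good M (-2*j1-1) (2*j3+1) (-2*j2-1) := by
    refine ⟨?_, ?_, ?_, ?_, ?_, ?_, hp3⟩ <;> intro t ht h <;> have h0 := c0 t <;>
      first | (have h1 := c1 t ht; linarith) | (have h1 := c2 t ht; linarith)
  obtain ⟨s, hs, hX⟩ := triple M _ _ _ g1 g2 g3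
  refine ⟨s, hs, ?_⟩
  intro n m hn hm
  have h := congrFun (congrFun hX ⟨n, by omega⟩) ⟨m, by omega⟩
  simp only [Matrix.smul_apply, smul_eq_mul, Matrix.one_apply, Fin.mk.injEq] at h
  rw [← h, Sm, Matrix.mul_diagonal, Matrix.mul_apply, Finset.sum_comm,
    ← Fin.sum_univ_eq_sum_range, Finset.sum_mul]
  apply Finset.sum_congr rfl
  intro k2 _
  rw [Matrix.mul_diagonal, Matrix.mul_apply, ← Fin.sum_univ_eq_sum_range, Finset.sum_mul,
    Finset.sum_mul, Finset.sum_mul]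
  apply Finset.sum_congr rfl
  intro k1 _
  rw [Matrix.mul_diagonal]
  simp only [Um]
  rw [pow_add, pow_add]
  ring
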